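/- Let (Ω, 𝒜, μ) be a measure space, p ∈ [1,∞), and T a positive C₀-semigroup on L_p(μ) with generator A, and let V : Ω → [0,∞] be T-admissible. Then for every ε > 0, every n ∈ ℕ, and every t ≥ 0 one has (T_{εV})_{V − V∧n}(t) ≤ T_{V − V∧n}(t); letting n → ∞ yields T_{εV}(t) ≤ (T_V)_{−V}(t) for all ε > 0 and t ≥ 0, and letting ε → 0+ yields T_{0,V} ≤ (T_V)_{−V} in the sense that T_{0,V}(t)f ≤ (T_V)_{−V}(t)f for all t ≥ 0 and all f ≥ 0 in L_p(μ). -/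

import Mathlib

open MeasureTheory Filter Topology ENNReal

noncomputable section

namespace Absorption

variable {E : Type*} [NormedAddCommGroup E] [NormedSpace ℝ E]

/-- A one-parameter semigroup of bounded operators (for nonnegative times). -/
def IsSemigroup (T : ℝ → E →L[ℝ] E) : Prop :=
  T 0 = ContinuousLinearMap.id ℝ E ∧
    ∀ s t : ℝ, 0 ≤ s → 0 ≤ t → T (s + t) = (T s).comp (T t)

/-- A `C₀`-semigroup: a one-parameter semigroup which is strongly continuous on `[0, ∞)`. -/
def IsC0Semigroup (T : ℝ → E →L[ℝ] E) : Prop :=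
  IsSemigroup T ∧ ∀ f : E, ContinuousOn (fun t => T t f) (Set.Ici (0 : ℝ))

/-- `(f, g)` belongs to the graph of the generator of the semigroup `T`. -/
def InGenerator (T : ℝ → E →L[ℝ] E) (f g : E) : Prop :=
  Tendsto (fun t : ℝ => t⁻¹ • (T t f - f)) (𝓝[>] (0 : ℝ)) (𝓝 g)

variable {Ω : Type*} [MeasurableSpace Ω]

/-- A function into a measurable space is *locally measurable* (w.r.t. `μ`) if on every set of
finite measure it coincides a.e. with a measurable function. -/
def LocallyMeasurable {α : Type*} [MeasurableSpace α] (μ : Measure Ω) (V : Ω → α) : Prop :=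
  ∀ B : Set Ω, MeasurableSet B → μ B < ∞ →
    ∃ g : Ω → α, Measurable g ∧ ∀ᵐ ω ∂(μ.restrict B), V ω = g ω

/-- A set is a local `μ`-null set if its intersection with every measurable set of finite
measure is null. -/
def IsLocalNullSet (μ : Measure Ω) (N : Set Ω) : Prop :=
  ∀ B : Set Ω, MeasurableSet B → μ B < ∞ → μ (N ∩ B) = 0

/-- Positivity of a family of operators on `L_p` (for positive times). -/
def IsPositiveSG {p : ℝ≥0∞} {μ : Measure Ω} [Fact (1 ≤ p)]
    (T : ℝ → Lp ℝ p μ →L[ℝ] Lp ℝ p μ) : Prop :=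
  ∀ t : ℝ, 0 ≤ t → ∀ f : Lp ℝ p μ, 0 ≤ f → 0 ≤ T t f

/-- A band projection on the Banach lattice `L_p(μ)`: an idempotent operator `P`
with `0 ≤ P f ≤ f` for all `f ≥ 0`. -/
def IsBandProjection {p : ℝ≥0∞} {μ : Measure Ω} [Fact (1 ≤ p)]
    (P : Lp ℝ p μ →L[ℝ] Lp ℝ p μ) : Prop :=
  P.comp P = P ∧ ∀ f : Lp ℝ p μ, 0 ≤ f → 0 ≤ P f ∧ P f ≤ f

/-- `S = (e^{t(A−W)})_{t ≥ 0}`: `S` is the `C₀`-semigroup whose generator is `A - W`,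
where `A` is the generator of `T` and the bounded function `W` acts by multiplication. -/
def IsPerturbedSG (μ : Measure Ω) (p : ℝ≥0∞) [Fact (1 ≤ p)]
    (T S : ℝ → Lp ℝ p μ →L[ℝ] Lp ℝ p μ) (W : Ω → ℝ) : Prop :=
  IsC0Semigroup S ∧
    ∀ f g : Lp ℝ p μ, InGenerator S f g ↔
      ∃ g₀ : Lp ℝ p μ, InGenerator T f g₀ ∧
        ⇑g =ᵐ[μ] fun ω => g₀ ω - W ω * f ω

/-- Same as `IsPerturbedSG`, for semigroups acting on a subspace `F` of `L_p(μ)`. -/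
def IsPerturbedSGSub (μ : Measure Ω) (p : ℝ≥0∞) [Fact (1 ≤ p)] (F : Submodule ℝ (Lp ℝ p μ))
    (T S : ℝ → F →L[ℝ] F) (W : Ω → ℝ) : Prop :=
  IsC0Semigroup S ∧
    ∀ f g : F, InGenerator S f g ↔
      ∃ g₀ : F, InGenerator T f g₀ ∧
        ⇑(g : Lp ℝ p μ) =ᵐ[μ] fun ω => (g₀ : Lp ℝ p μ) ω - W ω * (f : Lp ℝ p μ) ω

/-- The truncation `V ∧ n` of `V : Ω → [0,∞]`, as a real-valued function. -/
def trunc (V : Ω → ℝ≥0∞) (n : ℕ) : Ω → ℝ := fun ω => (min (V ω) (n : ℝ≥0∞)).toReal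

/-- The scalar multiple `ε V` of an absorption rate `V : Ω → [0,∞]`. -/
def smulRate (ε : ℝ) (V : Ω → ℝ≥0∞) : Ω → ℝ≥0∞ := fun ω => ENNReal.ofReal ε * V ω

/-- The absorption rate `V - V ∧ n` (with value `∞` wherever `V = ∞`). -/
def resid (V : Ω → ℝ≥0∞) (n : ℕ) : Ω → ℝ≥0∞ := fun ω => V ω - min (V ω) (n : ℝ≥0∞)

/-- `TV` is the absorption semigroup `T_V` associated with the rate `V : Ω → [0,∞]`, i.e.
the strong limit `T_V(t) = s-lim_{n→∞} e^{t(A - V∧n)}` (for `t ≥ 0`). -/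
def IsAbsorptionSG (μ : Measure Ω) (p : ℝ≥0∞) [Fact (1 ≤ p)]
    (T : ℝ → Lp ℝ p μ →L[ℝ] Lp ℝ p μ) (V : Ω → ℝ≥0∞)
    (TV : ℝ → Lp ℝ p μ →L[ℝ] Lp ℝ p μ) : Prop :=
  ∃ S : ℕ → ℝ → Lp ℝ p μ →L[ℝ] Lp ℝ p μ,
    (∀ n, IsPerturbedSG μ p T (S n) (trunc V n)) ∧
    ∀ t : ℝ, 0 ≤ t → ∀ f, Tendsto (fun n => S n t f) atTop (𝓝 (TV t f))

/-- `V : Ω → [0,∞]` is `T`-admissible: `V` is locally measurable, the strong limits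
`T_V(t) = s-lim_{n→∞} e^{t(A - V∧n)}` exist, and `T_V` is a `C₀`-semigroup. -/
def Admissible (μ : Measure Ω) (p : ℝ≥0∞) [Fact (1 ≤ p)]
    (T : ℝ → Lp ℝ p μ →L[ℝ] Lp ℝ p μ) (V : Ω → ℝ≥0∞) : Prop :=
  LocallyMeasurable μ V ∧
  ∃ TV, IsAbsorptionSG μ p T V TV ∧ IsC0Semigroup TV

/-- The truncation `(V ∧ n) ∨ (−n)` of an extended-real-valued rate, as a real function. -/
def truncE (V : Ω → EReal) (n : ℕ) : Ω → ℝ :=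
  fun ω => (max (min (V ω) (n : EReal)) (-(n : EReal))).toReal

/-- `TV` is the absorption semigroup `T_V` of an extended-real-valued rate `V`:
`T_V(t) = s-lim_{n→∞} e^{t(A - (V∧n)∨(−n))}` (for `t ≥ 0`). -/
def IsAbsorptionSGE (μ : Measure Ω) (p : ℝ≥0∞) [Fact (1 ≤ p)]
    (T : ℝ → Lp ℝ p μ →L[ℝ] Lp ℝ p μ) (V : Ω → EReal)
    (TV : ℝ → Lp ℝ p μ →L[ℝ] Lp ℝ p μ) : Prop :=
  ∃ S : ℕ → ℝ → Lp ℝ p μ →L[ℝ] Lp ℝ p μ,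
    (∀ n, IsPerturbedSG μ p T (S n) (truncE V n)) ∧
    ∀ t : ℝ, 0 ≤ t → ∀ f, Tendsto (fun n => S n t f) atTop (𝓝 (TV t f))

/-- `T`-admissibility for an extended-real-valued absorption rate `V`. -/
def AdmissibleE (μ : Measure Ω) (p : ℝ≥0∞) [Fact (1 ≤ p)]
    (T : ℝ → Lp ℝ p μ →L[ℝ] Lp ℝ p μ) (V : Ω → EReal) : Prop :=
  LocallyMeasurable μ V ∧
  ∃ TV, IsAbsorptionSGE μ p T V TV ∧ IsC0Semigroup TV

end Absorption

open Absorption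

/-!
Write `S_k = e^{t(A - εV∧k)}`, which decreases to `U = T_{εV}`, and let `Q_{n,m}` be the semigroup
obtained from `U` by the perturbation `(V - V∧n) ∧ m`. By Duhamel's formula, `ε (U - Q_{n,m})` and
`S_k - S_K` are convolutions of positive semigroups with the multiplication operators
`ε ((V - V∧n) ∧ m)` and `εV∧K - εV∧k`. For `k ≤ εn` and `k + εm ≤ K` the second function dominates
the first, and as `U ≤ S_k` and `Q_{n,m} ≤ S_K`, this gives `ε (U - Q_{n,m}) ≤ S_k - S_K`. Letting
`K → ∞` and `m → ∞` yields `ε (U - T_{V - V∧n}) ≤ S_k - U`, because `U_{V - V∧n} ≤ T_{V - V∧n}`;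
letting `n → ∞` and then `k → ∞` yields `U ≤ (T_V)_{-V}`.

The monotonicity `U_{V - V∧n} ≤ T_{V - V∧n}` also rests on Duhamel's formula, after a rescaling that
turns the perturbation into a positive one: a continuous `w` with `T * Bw ≤ w` for positive `T` and
`B` is nonnegative, since Gronwall's inequality annihilates its negative part.
-/

namespace Absorption

open Set
open scoped NNReal

section Banach

variable {E : Type*} [NormedAddCommGroup E] [NormedSpace ℝ E]
  {T S : ℝ → E →L[ℝ] E} {B : E →L[ℝ] E} {D : Set E} {f g : E} {s t : ℝ}

/-- The domain of the generator of `T`. -/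
def generatorDomain (T : ℝ → E →L[ℝ] E) : Set E := {f | ∃ g, InGenerator T f g}

/-- Boundedness of a family of operators on compact time intervals. -/
def LocallyBounded (T : ℝ → E →L[ℝ] E) : Prop :=
  ∀ τ : ℝ, ∃ C : ℝ≥0, ∀ t ∈ Icc 0 τ, ‖T t‖ ≤ C

lemma IsSemigroup.apply_zero (hT : IsSemigroup T) (f : E) : T 0 f = f := by
  simp only [hT.1, ContinuousLinearMap.id_apply]

lemma IsSemigroup.apply_add (hT : IsSemigroup T) (hs : 0 ≤ s) (ht : 0 ≤ t) (f : E) :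
    T (s + t) f = T s (T t f) := by
  rw [hT.2 s t hs ht, ContinuousLinearMap.comp_apply]

lemma IsC0Semigroup.locallyBounded [CompleteSpace E] (hT : IsC0Semigroup T) :
    LocallyBounded T := by
  intro τ
  have orbit_bounded (f : E) : ∃ C, ∀ t : Icc 0 τ, ‖T t f‖ ≤ C := by
    obtain ⟨C, hC⟩ := isCompact_Icc.exists_bound_of_continuousOn
      ((hT.2 f).mono (Icc_subset_Ici_self : Icc 0 τ ⊆ Ici 0))
    exact ⟨C, fun t => hC t t.2⟩
  obtain ⟨C, hC⟩ := banach_steinhaus orbit_bounded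
  exact ⟨C.toNNReal, fun t ht => (hC ⟨t, ht⟩).trans (Real.le_coe_toNNReal C)⟩

/-! ### Strong continuity -/

lemma InGenerator.tendsto_zero (h : InGenerator T f g) :
    Tendsto (fun t => T t f) (𝓝[>] 0) (𝓝 f) := by
  have increment_tendsto : Tendsto (fun t : ℝ => f + t • t⁻¹ • (T t f - f)) (𝓝[>] 0)
      (𝓝 (f + (0 : ℝ) • g)) :=
    tendsto_const_nhds.add ((tendsto_id.mono_left nhdsWithin_le_nhds).smul h)
  rw [zero_smul, add_zero] at increment_tendsto
  refine increment_tendsto.congr' ?_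
  filter_upwards [self_mem_nhdsWithin] with t ht
  rw [smul_inv_smul₀ (ne_of_gt ht), add_sub_cancel]

lemma IsSemigroup.norm_apply_sub_apply_le (hT : IsSemigroup T) {C τ : ℝ}
    (hC : ∀ t ∈ Icc 0 τ, ‖T t‖ ≤ C) (hs : s ∈ Icc 0 τ) (ht : t ∈ Icc 0 τ) (f : E) :
    ‖T s f - T t f‖ ≤ C * ‖T |s - t| f - f‖ := by
  wlog hst : s ≤ t generalizing s t
  · rw [norm_sub_rev, abs_sub_comm]
    exact this ht hs (le_of_not_ge hst)
  have split : T t f = T s (T |s - t| f) := by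
    rw [← hT.apply_add hs.1 (abs_nonneg _), abs_sub_comm, abs_of_nonneg (sub_nonneg.2 hst),
      add_sub_cancel]
  rw [split, norm_sub_rev, ← map_sub]
  exact (T s).le_of_opNorm_le (hC s hs) _

lemma IsSemigroup.continuousOn_orbit (hT : IsSemigroup T) (hTb : LocallyBounded T)
    (hf : Tendsto (fun t => T t f) (𝓝[>] 0) (𝓝 f)) :
    ContinuousOn (fun t => T t f) (Ici 0) := by
  have continuous_at_zero : Tendsto (fun t => T t f) (𝓝[≥] 0) (𝓝 f) := by
    have := continuousWithinAt_Ioi_iff_Ici (f := fun t => T t f) (a := (0 : ℝ))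
    simpa only [ContinuousWithinAt, hT.apply_zero, hf, true_iff] using this
  intro t ht
  obtain ⟨C, hC⟩ := hTb (t + 1)
  have dist_tendsto : Tendsto (fun s => |s - t|) (𝓝[Ici 0] t) (𝓝[≥] 0) := by
    refine tendsto_nhdsWithin_iff.2 ⟨?_, Eventually.of_forall fun s => mem_Ici.2 (abs_nonneg _)⟩
    have : Continuous fun s : ℝ => |s - t| := by fun_prop
    simpa only [sub_self, abs_zero] using (this.tendsto t).mono_left nhdsWithin_le_nhds
  have bound_tendsto : Tendsto (fun s => C * ‖T |s - t| f - f‖) (𝓝[Ici 0] t) (𝓝 0) := by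
    simpa only [sub_self, norm_zero, mul_zero, Function.comp_def] using
      ((continuous_at_zero.comp dist_tendsto).sub_const f).norm.const_mul (C : ℝ)
  refine tendsto_iff_norm_sub_tendsto_zero.2 (squeeze_zero' ?_ ?_ bound_tendsto)
  · exact Eventually.of_forall fun s => norm_nonneg _
  · filter_upwards [self_mem_nhdsWithin,
      nhdsWithin_le_nhds (eventually_le_nhds (lt_add_one t))] with s hs hst
    exact hT.norm_apply_sub_apply_le hC ⟨hs, hst⟩ ⟨ht, (lt_add_one t).le⟩ f

lemma LocallyBounded.continuousOn_uncurry (hT : LocallyBounded T) (hD : Dense D)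
    (h : ∀ f ∈ D, ContinuousOn (fun t => T t f) (Ici 0)) :
    ContinuousOn (fun q : ℝ × E => T q.1 q.2) (Ici 0 ×ˢ univ) := by
  rintro ⟨t, f⟩ ⟨ht, -⟩
  obtain ⟨C, hC⟩ := hT (t + 1)
  have continuousOn_Icc : ContinuousOn (fun q : ℝ × E => T q.1 q.2) (Icc 0 (t + 1) ×ˢ univ) := by
    refine continuousOn_prod_of_subset_closure_continuousOn_lipschitzOnWith' _ (subset_univ D)
      (by rw [hD.closure_eq]) C (fun s hs => ?_) fun f hf => (h f hf).mono Icc_subset_Ici_self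
    exact ((T s).lipschitz.weaken (hC s hs)).lipschitzOnWith
  refine (continuousOn_Icc (t, f) ⟨⟨ht, (lt_add_one t).le⟩, trivial⟩).mono_of_mem_nhdsWithin ?_
  filter_upwards [self_mem_nhdsWithin, nhdsWithin_le_nhds
    (continuous_fst.continuousAt.eventually (eventually_le_nhds (lt_add_one t)))] with q hq hqt
  exact ⟨⟨hq.1, hqt⟩, trivial⟩

lemma IsC0Semigroup.continuousOn_uncurry [CompleteSpace E] (hT : IsC0Semigroup T) :
    ContinuousOn (fun q : ℝ × E => T q.1 q.2) (Ici 0 ×ˢ univ) :=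
  hT.locallyBounded.continuousOn_uncurry dense_univ fun f _ => hT.2 f

lemma IsSemigroup.isC0Semigroup_of_dense_generatorDomain (hT : IsSemigroup T)
    (hTb : LocallyBounded T) (hD : Dense (generatorDomain T)) : IsC0Semigroup T := by
  have joint := hTb.continuousOn_uncurry hD fun f ⟨_, hg⟩ =>
    hT.continuousOn_orbit hTb hg.tendsto_zero
  exact ⟨hT, fun f => joint.comp (continuousOn_id.prodMk continuousOn_const)
    fun t ht => ⟨ht, trivial⟩⟩

lemma isSemigroup_of_tendsto [CompleteSpace E] {S : ℕ → ℝ → E →L[ℝ] E}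
    (hS : ∀ n, IsSemigroup (S n))
    (h : ∀ t, 0 ≤ t → ∀ f, Tendsto (fun n => S n t f) atTop (𝓝 (T t f))) : IsSemigroup T := by
  constructor
  · ext f
    refine tendsto_nhds_unique (h 0 le_rfl f) ?_
    simp only [(hS _).apply_zero, ContinuousLinearMap.id_apply, tendsto_const_nhds_iff]
  intro s t hs ht
  ext f
  obtain ⟨C, hC⟩ := banach_steinhaus (g := fun n => S n s) fun f => by
    obtain ⟨C, hC⟩ := (Metric.isBounded_range_of_tendsto _ (h s hs f)).exists_norm_le
    exact ⟨C, fun n => hC _ ⟨n, rfl⟩⟩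
  have error_tendsto : Tendsto (fun n => S n s (S n t f - T t f)) atTop (𝓝 0) := by
    refine squeeze_zero_norm (fun n => (S n s).le_of_opNorm_le (hC n) _) ?_
    simpa only [sub_self, norm_zero, mul_zero] using
      ((h t ht f).sub_const (T t f)).norm.const_mul C
  refine tendsto_nhds_unique (h (s + t) (add_nonneg hs ht) f) ?_
  have := error_tendsto.add (h s hs (T t f))
  simpa only [map_sub, sub_add_cancel, zero_add, (hS _).apply_add hs ht,
    ContinuousLinearMap.comp_apply] using this

/-! ### Density of the generator domain -/

lemma hasDerivWithinAt_integral_Ici [CompleteSpace E] {w : ℝ → E} (hw : ContinuousOn w (Ici 0))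
    (ht : 0 ≤ t) : HasDerivWithinAt (fun t => ∫ s in (0 : ℝ)..t, w s) (w t) (Ici t) t := by
  refine (intervalIntegral.integral_hasDerivWithinAt_right
    ((hw.mono Icc_subset_Ici_self).intervalIntegrable_of_Icc ht)
    (t := Ioi t) ?_ ((hw t ht).mono fun s hs => ht.trans (le_of_lt hs)))
  exact (hw.stronglyMeasurableAtFilter_nhdsWithin measurableSet_Ici t).filter_mono
    (nhdsWithin_mono t fun s hs => ht.trans (le_of_lt hs))

lemma eq_zero_of_le_mul_integral {φ : ℝ → ℝ} {K : ℝ} (hφc : ContinuousOn φ (Ici 0))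
    (hφ : ∀ s, 0 ≤ s → 0 ≤ φ s) (h : ∀ s ∈ Icc 0 t, φ s ≤ K * ∫ r in (0 : ℝ)..s, φ r)
    (ht : 0 ≤ t) : φ t = 0 := by
  have primitive_continuous : ContinuousOn (fun s => ∫ r in (0 : ℝ)..s, φ r) (Icc 0 t) := by
    have integrable := (hφc.mono (Icc_subset_Ici_self : Icc 0 t ⊆ Ici 0)).integrableOn_Icc
      (μ := volume)
    rw [← uIcc_of_le ht] at integrable ⊢
    exact intervalIntegral.continuousOn_primitive_interval integrable
  have integral_eq_zero : ∫ r in (0 : ℝ)..t, φ r = 0 := by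
    refine eq_zero_of_abs_deriv_le_mul_abs_self_of_eq_zero_right
      (f := fun s => ∫ r in (0 : ℝ)..s, φ r) (f' := φ) (K := K) primitive_continuous
      (fun s hs => hasDerivWithinAt_integral_Ici hφc hs.1) intervalIntegral.integral_same
      (fun s hs => ?_) t ⟨ht, le_rfl⟩
    rw [Real.norm_of_nonneg (hφ s hs.1), Real.norm_of_nonneg
      (intervalIntegral.integral_nonneg hs.1 fun r hr => hφ r hr.1)]
    exact h s (Ico_subset_Icc_self hs)
  refine le_antisymm ?_ (hφ t ht)
  simpa only [integral_eq_zero, mul_zero] using h t ⟨ht, le_rfl⟩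

lemma hasDerivWithinAt_Ioi_iff_tendsto_slope_zero {w : ℝ → E} {w' : E} {a : ℝ} :
    HasDerivWithinAt w w' (Ioi a) a ↔
      Tendsto (fun t => t⁻¹ • (w (a + t) - w a)) (𝓝[>] 0) (𝓝 w') := by
  have nhds_eq : 𝓝[>] a = Filter.map (fun t => a + t) (𝓝[>] 0) := by
    rw [map_add_left_nhdsGT, add_zero]
  rw [hasDerivWithinAt_iff_tendsto_slope' self_notMem_Ioi, nhds_eq, tendsto_map'_iff]
  simp only [Function.comp_def, slope_def_module, add_sub_cancel_left]

lemma tendsto_average_integral [CompleteSpace E] {w : ℝ → E} (hw : ContinuousOn w (Ici 0))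
    {a : ℝ} (ha : 0 ≤ a) :
    Tendsto (fun t : ℝ => t⁻¹ • ∫ s in a..a + t, w s) (𝓝[>] 0) (𝓝 (w a)) := by
  refine (hasDerivWithinAt_Ioi_iff_tendsto_slope_zero.1
    ((hasDerivWithinAt_integral_Ici hw ha).mono Ioi_subset_Ici_self)).congr' ?_
  filter_upwards [self_mem_nhdsWithin] with t ht
  have integrable {b : ℝ} (hb : 0 ≤ b) : IntervalIntegrable w volume 0 b :=
    (hw.mono Icc_subset_Ici_self).intervalIntegrable_of_Icc hb
  rw [intervalIntegral.integral_interval_sub_left (integrable (add_nonneg ha (le_of_lt ht)))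
    (integrable ha)]

lemma IsC0Semigroup.inGenerator_integral [CompleteSpace E] (hT : IsC0Semigroup T) {h : ℝ}
    (hh : 0 ≤ h) (f : E) : InGenerator T (∫ s in (0 : ℝ)..h, T s f) (T h f - f) := by
  have integrable {a b : ℝ} (ha : 0 ≤ a) (hb : 0 ≤ b) :
      IntervalIntegrable (fun s => T s f) volume a b :=
    ((hT.2 f).mono ((convex_Ici 0).ordConnected.uIcc_subset ha hb)).intervalIntegrable
  have boundary_tendsto := (tendsto_average_integral (hT.2 f) hh).sub
    (tendsto_average_integral (hT.2 f) le_rfl)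
  rw [hT.1.apply_zero] at boundary_tendsto
  refine boundary_tendsto.congr' ?_
  filter_upwards [self_mem_nhdsWithin] with t ht
  have ht' : 0 ≤ t := le_of_lt ht
  have shifted : T t (∫ s in (0 : ℝ)..h, T s f) = ∫ s in t..h + t, T s f := by
    rw [← (T t).intervalIntegral_comp_comm (integrable le_rfl hh)]
    calc ∫ s in (0 : ℝ)..h, T t (T s f) = ∫ s in (0 : ℝ)..h, T (s + t) f :=
          intervalIntegral.integral_congr fun s hs => by
            rw [uIcc_of_le hh] at hs
            simp only [add_comm s t, hT.1.apply_add ht' hs.1]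
      _ = ∫ s in t..h + t, T s f := by
        rw [intervalIntegral.integral_comp_add_right (fun s => T s f), zero_add]
  rw [shifted, ← smul_sub, zero_add, intervalIntegral.integral_interval_sub_interval_comm'
    (integrable ht' (add_nonneg hh ht')) (integrable le_rfl hh) (integrable ht' le_rfl)]

lemma InGenerator.smul (h : InGenerator T f g) (c : ℝ) : InGenerator T (c • f) (c • g) := by
  refine (h.const_smul c).congr fun t => ?_
  rw [map_smul, ← smul_sub, smul_comm]

lemma IsC0Semigroup.dense_generatorDomain [CompleteSpace E] (hT : IsC0Semigroup T) :
    Dense (generatorDomain T) := by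
  intro f
  have average_tendsto := tendsto_average_integral (hT.2 f) le_rfl
  rw [hT.1.apply_zero] at average_tendsto
  refine mem_closure_of_tendsto average_tendsto ?_
  filter_upwards [self_mem_nhdsWithin] with t ht
  rw [zero_add]
  exact ⟨_, (hT.inGenerator_integral (le_of_lt ht) f).smul t⁻¹⟩

lemma IsSemigroup.inGenerator_apply (hT : IsSemigroup T) (h : InGenerator T f g) (hs : 0 ≤ s) :
    InGenerator T (T s f) (T s g) := by
  refine (((T s).continuous.tendsto g).comp h).congr' ?_
  filter_upwards [self_mem_nhdsWithin] with t ht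
  rw [Function.comp_apply, map_smul, map_sub, ← hT.apply_add hs (le_of_lt ht), add_comm s,
    hT.apply_add (le_of_lt ht) hs]

/-! ### Bounded perturbations -/

/-- The generator of `S` is `A - B`, where `A` is the generator of `T`; the sign is the one of an
absorption term. -/
def IsBoundedPerturbation (T S : ℝ → E →L[ℝ] E) (B : E →L[ℝ] E) : Prop :=
  ∀ f g, InGenerator S f g ↔ InGenerator T f (g + B f)

lemma IsBoundedPerturbation.relative {S₁ S₂ : ℝ → E →L[ℝ] E} {B₁ B₂ : E →L[ℝ] E}
    (h₁ : IsBoundedPerturbation T S₁ B₁) (h₂ : IsBoundedPerturbation T S₂ B₂) :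
    IsBoundedPerturbation S₁ S₂ (B₂ - B₁) := fun f g => by
  rw [h₁, h₂, _root_.sub_apply, add_assoc, sub_add_cancel]

/-- The rescaled semigroup `e^{-mt} T(t)`, whose generator is `A - m`. -/
def rescale (m : ℝ) (T : ℝ → E →L[ℝ] E) : ℝ → E →L[ℝ] E := fun t => Real.exp (-(m * t)) • T t

lemma rescale_apply (m : ℝ) (T : ℝ → E →L[ℝ] E) (t : ℝ) (f : E) :
    rescale m T t f = Real.exp (-(m * t)) • T t f := rfl

lemma rescale_rescale (m n : ℝ) (T : ℝ → E →L[ℝ] E) :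
    rescale m (rescale n T) = rescale (m + n) T := by
  funext t
  rw [rescale, rescale, rescale, smul_smul, ← Real.exp_add, add_mul, neg_add]

lemma rescale_zero (T : ℝ → E →L[ℝ] E) : rescale 0 T = T := by
  funext t
  rw [rescale, zero_mul, neg_zero, Real.exp_zero, one_smul]

lemma IsC0Semigroup.rescale (hT : IsC0Semigroup T) (m : ℝ) : IsC0Semigroup (rescale m T) := by
  refine ⟨⟨?_, fun s t hs ht => ?_⟩, fun f => ?_⟩
  · rw [Absorption.rescale, mul_zero, neg_zero, Real.exp_zero, one_smul, hT.1.1]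
  · ext f
    simp only [rescale_apply, ContinuousLinearMap.comp_apply, hT.1.apply_add hs ht, map_smul,
      smul_smul, ← Real.exp_add, mul_add, neg_add_rev]
  · have : ContinuousOn (fun t : ℝ => Real.exp (-(m * t))) (Ici 0) := by fun_prop
    exact this.smul (hT.2 f)

lemma InGenerator.rescale (h : InGenerator T f g) (m : ℝ) :
    InGenerator (rescale m T) f (g - m • f) := by
  have exp_deriv : HasDerivAt (fun t : ℝ => Real.exp (-(m * t))) (-m) 0 := by
    simpa using ((hasDerivAt_id (0 : ℝ)).const_mul m).neg.exp
  have exp_tendsto : Tendsto (fun t : ℝ => Real.exp (-(m * t))) (𝓝[>] 0) (𝓝 1) := by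
    simpa using exp_deriv.continuousAt.tendsto.mono_left nhdsWithin_le_nhds
  have := (exp_tendsto.smul h).add (exp_deriv.tendsto_slope_zero_right.smul_const f)
  simp only [one_smul, neg_smul, ← sub_eq_add_neg, zero_add, mul_zero, neg_zero, Real.exp_zero,
    smul_eq_mul] at this
  refine this.congr fun t => ?_
  rw [rescale_apply]
  module

lemma isBoundedPerturbation_rescale (m : ℝ) (T : ℝ → E →L[ℝ] E) :
    IsBoundedPerturbation T (rescale m T) (m • ContinuousLinearMap.id ℝ E) := by
  intro f g
  rw [_root_.smul_apply, ContinuousLinearMap.id_apply]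
  constructor <;> intro h
  · simpa only [rescale_rescale, neg_add_cancel, rescale_zero, neg_smul, sub_neg_eq_add] using
      h.rescale (-m)
  · simpa only [add_sub_cancel_right] using h.rescale m

/-! ### Duhamel's formula -/

/-- The convolution `∫₀ᵗ T(t - s) B w(s) ds` of Duhamel's formula. -/
def volterra (T : ℝ → E →L[ℝ] E) (B : E →L[ℝ] E) (w : ℝ → E) (t : ℝ) : E :=
  ∫ s in (0 : ℝ)..t, T (t - s) (B (w s))

variable {w w₁ w₂ : ℝ → E}

lemma norm_volterra_le {C : ℝ} (hC : ∀ s ∈ Icc 0 t, ‖T s‖ ≤ C) (B : E →L[ℝ] E)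
    (hw : ContinuousOn w (Ici 0)) (ht : 0 ≤ t) :
    ‖volterra T B w t‖ ≤ C * ‖B‖ * ∫ s in (0 : ℝ)..t, ‖w s‖ := by
  rw [← intervalIntegral.integral_const_mul]
  refine intervalIntegral.norm_integral_le_of_norm_le ht (Eventually.of_forall fun s hs => ?_)
    (((hw.norm.mono Icc_subset_Ici_self).intervalIntegrable_of_Icc ht).const_mul _)
  rw [mul_assoc]
  exact (T _).le_of_opNorm_le_of_le (hC _ ⟨sub_nonneg.2 hs.2, sub_le_self t hs.1.le⟩)
    (B.le_opNorm _)

variable [CompleteSpace E]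

lemma IsC0Semigroup.continuousOn_convolution (hT : IsC0Semigroup T) (B : E →L[ℝ] E)
    (hw : ContinuousOn w (Ici 0)) (t : ℝ) :
    ContinuousOn (fun s => T (t - s) (B (w s))) (Icc 0 t) :=
  hT.continuousOn_uncurry.comp ((continuousOn_const.sub continuousOn_id).prodMk
    (B.continuous.comp_continuousOn (hw.mono Icc_subset_Ici_self)))
    fun _ hs => ⟨sub_nonneg.2 hs.2, trivial⟩

lemma IsC0Semigroup.intervalIntegrable_convolution (hT : IsC0Semigroup T) (B : E →L[ℝ] E)
    (hw : ContinuousOn w (Ici 0)) (ht : 0 ≤ t) :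
    IntervalIntegrable (fun s => T (t - s) (B (w s))) volume 0 t :=
  (hT.continuousOn_convolution B hw t).intervalIntegrable_of_Icc ht

lemma IsC0Semigroup.volterra_sub (hT : IsC0Semigroup T) (B : E →L[ℝ] E)
    (hw₁ : ContinuousOn w₁ (Ici 0)) (hw₂ : ContinuousOn w₂ (Ici 0)) (ht : 0 ≤ t) :
    volterra T B (w₁ - w₂) t = volterra T B w₁ t - volterra T B w₂ t := by
  simp only [volterra, Pi.sub_apply, map_sub]
  exact intervalIntegral.integral_sub (hT.intervalIntegrable_convolution B hw₁ ht)
    (hT.intervalIntegrable_convolution B hw₂ ht)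

lemma IsBoundedPerturbation.hasDerivWithinAt_interpolation (hT : IsC0Semigroup T)
    (hS : IsSemigroup S) (hTS : IsBoundedPerturbation T S B) (hf : f ∈ generatorDomain S)
    (hs : 0 ≤ s) (hst : s < t) :
    HasDerivWithinAt (fun s => T (t - s) (S s f)) (-T (t - s) (B (S s f))) (Ioi s) s := by
  obtain ⟨g, hg⟩ := hf
  have orbit_in_S := hS.inGenerator_apply hg hs
  have quotient_tendsto : Tendsto (fun u => u⁻¹ • (S u (S s f) - T u (S s f))) (𝓝[>] 0)
      (𝓝 (-B (S s f))) := by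
    simpa only [← smul_sub, sub_sub_sub_cancel_right, sub_add_cancel_left] using
      orbit_in_S.sub ((hTS _ _).1 orbit_in_S)
  have time_tendsto : Tendsto (fun u => t - (s + u)) (𝓝[>] 0) (𝓝 (t - s)) := by
    have : Continuous fun u => t - (s + u) := by fun_prop
    simpa only [add_zero] using (this.tendsto 0).mono_left nhdsWithin_le_nhds
  have small : ∀ᶠ u in 𝓝[>] (0 : ℝ), u ∈ Ioo 0 (t - s) := Ioo_mem_nhdsGT (sub_pos.2 hst)
  have joint_tendsto := (hT.continuousOn_uncurry (t - s, -B (S s f))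
    ⟨sub_nonneg.2 hst.le, trivial⟩).tendsto.comp (tendsto_nhdsWithin_iff.2
      ⟨time_tendsto.prodMk_nhds quotient_tendsto, small.mono fun u hu =>
        ⟨by simpa only [mem_Ici] using by linarith [hu.2], trivial⟩⟩)
  rw [hasDerivWithinAt_Ioi_iff_tendsto_slope_zero, ← map_neg]
  refine joint_tendsto.congr' (small.mono fun u hu => ?_)
  have split : T (t - s) (S s f) = T (t - (s + u)) (T u (S s f)) := by
    rw [← hT.1.apply_add (by linarith [hu.2]) hu.1.le]
    congr 2
    ring
  simp only [Function.comp_apply]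
  rw [split, add_comm s u, hS.apply_add hu.1.le hs, map_smul, map_sub]

lemma IsBoundedPerturbation.duhamel_of_mem_generatorDomain (hT : IsC0Semigroup T)
    (hS : IsC0Semigroup S) (hTS : IsBoundedPerturbation T S B) (hf : f ∈ generatorDomain S)
    (ht : 0 ≤ t) : T t f - S t f = volterra T B (fun s => S s f) t := by
  have interpolation_continuous : ContinuousOn (fun s => T (t - s) (S s f)) (Icc 0 t) :=
    hT.continuousOn_convolution (ContinuousLinearMap.id ℝ E) (hS.2 f) t
  have ftc := intervalIntegral.integral_eq_sub_of_hasDeriv_right_of_le ht interpolation_continuous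
    (fun s hs => hTS.hasDerivWithinAt_interpolation hT hS.1 hf hs.1.le hs.2)
    (hT.intervalIntegrable_convolution B (hS.2 f) ht).neg
  rw [intervalIntegral.integral_neg, sub_self, sub_zero, hT.1.apply_zero, hS.1.apply_zero] at ftc
  rw [volterra, ← neg_neg (∫ _ in _.._, _), ftc, neg_sub]

lemma IsC0Semigroup.continuous_volterra_orbit (hT : IsC0Semigroup T) (hS : IsC0Semigroup S)
    (B : E →L[ℝ] E) (ht : 0 ≤ t) : Continuous fun f => volterra T B (fun s => S s f) t := by
  obtain ⟨C, hC⟩ := hT.locallyBounded t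
  obtain ⟨K, hK⟩ := hS.locallyBounded t
  refine (LipschitzWith.of_dist_le_mul (K := C * ‖B‖₊ * (t.toNNReal * K)) fun f g => ?_).continuous
  have orbit_le : ∫ s in (0 : ℝ)..t, ‖S s (f - g)‖ ≤ t * (K * ‖f - g‖) := by
    have := intervalIntegral.integral_mono_on ht
      (((hS.2 (f - g)).norm.mono Icc_subset_Ici_self).intervalIntegrable_of_Icc ht)
      (intervalIntegrable_const (μ := volume) (c := K * ‖f - g‖))
      fun s hs => (S s).le_of_opNorm_le (hK s hs) (f - g)
    simpa only [intervalIntegral.integral_const, sub_zero, smul_eq_mul] using this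
  rw [dist_eq_norm, dist_eq_norm, ← hT.volterra_sub B (hS.2 f) (hS.2 g) ht]
  calc ‖volterra T B ((fun s => S s f) - fun s => S s g) t‖
      = ‖volterra T B (fun s => S s (f - g)) t‖ := by simp only [map_sub]; rfl
    _ ≤ C * ‖B‖ * ∫ s in (0 : ℝ)..t, ‖S s (f - g)‖ := norm_volterra_le hC B (hS.2 _) ht
    _ ≤ C * ‖B‖ * (t * (K * ‖f - g‖)) := by gcongr
    _ = ↑(C * ‖B‖₊ * (t.toNNReal * K)) * ‖f - g‖ := by
      simp only [NNReal.coe_mul, coe_nnnorm, Real.coe_toNNReal t ht]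
      ring

lemma IsBoundedPerturbation.duhamel (hT : IsC0Semigroup T) (hS : IsC0Semigroup S)
    (hTS : IsBoundedPerturbation T S B) (ht : 0 ≤ t) (f : E) :
    T t f - S t f = volterra T B (fun s => S s f) t :=
  congr_fun (Continuous.ext_on hS.dense_generatorDomain
    ((T t).continuous.sub (S t).continuous) (hT.continuous_volterra_orbit hS B ht)
    fun _ hf => hTS.duhamel_of_mem_generatorDomain hT hS hf ht) f

lemma IsBoundedPerturbation.apply_eq_rescale_add_volterra (hT : IsC0Semigroup T)
    (hS : IsC0Semigroup S) (hTS : IsBoundedPerturbation T S B) (m : ℝ) (ht : 0 ≤ t) (f : E) :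
    S t f = rescale m T t f +
      volterra (rescale m T) (m • ContinuousLinearMap.id ℝ E - B) (fun s => S s f) t := by
  have duhamel :=
    ((isBoundedPerturbation_rescale m T).relative hTS).duhamel (hT.rescale m) hS ht f
  have volterra_neg : volterra (rescale m T) (m • ContinuousLinearMap.id ℝ E - B)
      (fun s => S s f) t = S t f - rescale m T t f := by
    rw [← neg_sub (rescale m T t f), duhamel, ← neg_sub B]
    simp only [volterra, _root_.neg_apply, map_neg, intervalIntegral.integral_neg]
  rw [volterra_neg, add_sub_cancel]

end Banach

/-! ### Order on operators -/

/-- The order on operators induced by the positive cone: `A f ≤ B f` for all `f ≥ 0`. In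
particular `0 ≼ B` says that `B` is a positive operator. -/
def OpLE {E : Type*} [NormedAddCommGroup E] [NormedSpace ℝ E] [PartialOrder E]
    (A B : E →L[ℝ] E) : Prop := ∀ f, 0 ≤ f → A f ≤ B f

/-- Domination `S(t) ≤ T(t)` of operator families at all times `t ≥ 0`. In particular `0 ⊑ T` says
that `T` is positive. -/
def FamilyLE {E : Type*} [NormedAddCommGroup E] [NormedSpace ℝ E] [PartialOrder E]
    (S T : ℝ → E →L[ℝ] E) : Prop := ∀ t, 0 ≤ t → OpLE (S t) (T t)

local infix:50 " ≼ " => OpLE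
local infix:50 " ⊑ " => FamilyLE

section Order

variable {E : Type*} [NormedAddCommGroup E] [NormedSpace ℝ E] [PartialOrder E]
  {T S U T₁ T₂ S₁ S₂ : ℝ → E →L[ℝ] E} {A B B₁ B₂ : E →L[ℝ] E} {w₁ w₂ : ℝ → E} {t : ℝ}

lemma OpLE.trans {C : E →L[ℝ] E} (hAB : A ≼ B) (hBC : B ≼ C) : A ≼ C :=
  fun f hf => (hAB f hf).trans (hBC f hf)

lemma FamilyLE.refl (T : ℝ → E →L[ℝ] E) : T ⊑ T := fun _ _ _ _ => le_rfl

lemma FamilyLE.trans (hST : S ⊑ T) (hTU : T ⊑ U) : S ⊑ U :=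
  fun t ht => (hST t ht).trans (hTU t ht)

lemma FamilyLE.rescale [IsOrderedModule ℝ E] (h : S ⊑ T) (m : ℝ) : rescale m S ⊑ rescale m T :=
  fun t ht f hf => smul_le_smul_of_nonneg_left (h t ht f hf) (Real.exp_nonneg _)

lemma FamilyLE.rescale_nonneg [IsOrderedModule ℝ E] (h : 0 ⊑ T) (m : ℝ) :
    0 ⊑ Absorption.rescale m T :=
  fun t ht f hf => smul_nonneg (Real.exp_nonneg _) (h t ht f hf)

variable [IsOrderedAddMonoid E]

lemma OpLE.monotone (hB : 0 ≼ B) : Monotone B := fun f g hfg => by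
  have : 0 ≤ B (g - f) := hB _ (sub_nonneg.2 hfg)
  rwa [map_sub, sub_nonneg] at this

lemma OpLE.sub_nonneg (h : A ≼ B) : 0 ≼ B - A := fun f hf => _root_.sub_nonneg.2 (h f hf)

lemma OpLE.sub_le_sub_left (h : A ≼ B) (C : E →L[ℝ] E) : C - B ≼ C - A :=
  fun f hf => _root_.sub_le_sub_left (h f hf) (C f)

variable [IsOrderedModule ℝ E] [OrderClosedTopology E]

lemma intervalIntegral_mono_on {ν : Measure ℝ} {a b : ℝ} (hab : a ≤ b)
    (hw₁ : IntervalIntegrable w₁ ν a b) (hw₂ : IntervalIntegrable w₂ ν a b)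
    (h : ∀ s ∈ Icc a b, w₁ s ≤ w₂ s) : ∫ s in a..b, w₁ s ∂ν ≤ ∫ s in a..b, w₂ s ∂ν := by
  rw [intervalIntegral.integral_of_le hab, intervalIntegral.integral_of_le hab]
  exact setIntegral_mono_on hw₁.1 hw₂.1 measurableSet_Ioc fun s hs => h s (Ioc_subset_Icc_self hs)

variable [CompleteSpace E]

lemma volterra_mono (hT₁ : IsC0Semigroup T₁) (hT₂ : IsC0Semigroup T₂) (hT₁pos : 0 ⊑ T₁)
    (hT : T₁ ⊑ T₂) (hB₁ : 0 ≼ B₁) (hB : B₁ ≼ B₂) (hw₁c : ContinuousOn w₁ (Ici 0))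
    (hw₂c : ContinuousOn w₂ (Ici 0)) (hw₁ : ∀ s, 0 ≤ s → 0 ≤ w₁ s)
    (hw : ∀ s, 0 ≤ s → w₁ s ≤ w₂ s) (ht : 0 ≤ t) :
    volterra T₁ B₁ w₁ t ≤ volterra T₂ B₂ w₂ t := by
  refine intervalIntegral_mono_on ht (hT₁.intervalIntegrable_convolution B₁ hw₁c ht)
    (hT₂.intervalIntegrable_convolution B₂ hw₂c ht) fun s hs => ?_
  have B_le : B₁ (w₁ s) ≤ B₂ (w₂ s) :=
    (hB₁.monotone (hw s hs.1)).trans (hB _ ((hw₁ s hs.1).trans (hw s hs.1)))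
  calc T₁ (t - s) (B₁ (w₁ s)) ≤ T₁ (t - s) (B₂ (w₂ s)) :=
        (hT₁pos _ (_root_.sub_nonneg.2 hs.2)).monotone B_le
    _ ≤ T₂ (t - s) (B₂ (w₂ s)) :=
        hT _ (_root_.sub_nonneg.2 hs.2) _ ((hB₁ _ (hw₁ s hs.1)).trans B_le)

/-- Both sides are Duhamel integrals, and the integrand on the right dominates. -/
lemma IsBoundedPerturbation.smul_sub_le_sub {c : ℝ} (h : IsBoundedPerturbation U S B)
    (h' : IsBoundedPerturbation S₁ S₂ B₁) (hU : IsC0Semigroup U) (hS : IsC0Semigroup S)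
    (hS₁ : IsC0Semigroup S₁) (hS₂ : IsC0Semigroup S₂) (hUpos : 0 ⊑ U) (hSpos : 0 ⊑ S)
    (hUS₁ : U ⊑ S₁) (hSS₂ : S ⊑ S₂) (hB : 0 ≼ c • B) (hBB₁ : c • B ≼ B₁) (ht : 0 ≤ t) {f : E}
    (hf : 0 ≤ f) : c • (U t f - S t f) ≤ S₁ t f - S₂ t f := by
  have smul_volterra : c • volterra U B (fun s => S s f) t =
      volterra U (c • B) (fun s => S s f) t := by
    simp only [volterra, _root_.smul_apply, map_smul, intervalIntegral.integral_smul]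
  rw [h.duhamel hU hS ht f, h'.duhamel hS₁ hS₂ ht f, smul_volterra]
  exact volterra_mono hU hS₁ hUpos hUS₁ hB hBB₁ (hS.2 f) (hS₂.2 f)
    (fun s hs => hSpos s hs f hf) (fun s hs => hSS₂ s hs f hf) ht

end Order

section Lattice

variable {E : Type*} [NormedAddCommGroup E] [NormedSpace ℝ E] [Lattice E] [IsOrderedAddMonoid E]
  [HasSolidNorm E] {T S T₁ T₂ S₁ S₂ : ℝ → E →L[ℝ] E} {A B B₁ B₂ : E →L[ℝ] E} {w : ℝ → E} {m t : ℝ}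

lemma OpLE.norm_le (hA : 0 ≼ A) (hAB : A ≼ B) : ‖A‖ ≤ ‖B‖ := by
  refine A.opNorm_le_bound (norm_nonneg B) fun f => ?_
  have abs_le : |A f| ≤ B |f| := calc
    |A f| ≤ A |f| := abs_le'.2 ⟨hA.monotone (le_abs_self f), by
      rw [← map_neg]; exact hA.monotone (neg_le_abs f)⟩
    _ ≤ B |f| := hAB _ (abs_nonneg f)
  calc ‖A f‖ ≤ ‖B |f|‖ := norm_le_norm_of_abs_le_abs (abs_le.trans (le_abs_self _))
    _ ≤ ‖B‖ * ‖f‖ := by simpa only [norm_abs_eq_norm] using B.le_opNorm |f|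

lemma LocallyBounded.of_familyLE (hT : LocallyBounded T) (hS : 0 ⊑ S) (hST : S ⊑ T) :
    LocallyBounded S := fun τ =>
  (hT τ).imp fun _ hC t ht => ((hS t ht.1).norm_le (hST t ht.1)).trans (hC t ht)

variable [IsOrderedModule ℝ E] [CompleteSpace E]

lemma nonneg_of_volterra_le (hT : IsC0Semigroup T) (hTpos : 0 ⊑ T) (hB : 0 ≼ B)
    (hw : ContinuousOn w (Ici 0)) (h : ∀ s, 0 ≤ s → volterra T B w s ≤ w s) (ht : 0 ≤ t) :
    0 ≤ w t := by
  have posPart_continuous : ContinuousOn (fun s => (w s)⁺) (Ici 0) :=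
    continuous_posPart.comp_continuousOn hw
  have negPart_continuous : ContinuousOn (fun s => (w s)⁻) (Ici 0) :=
    continuous_negPart.comp_continuousOn hw
  have volterra_nonneg {v : ℝ → E} (hv : ContinuousOn v (Ici 0)) (hv0 : ∀ s, 0 ≤ s → 0 ≤ v s)
      {s : ℝ} (hs : 0 ≤ s) : 0 ≤ volterra T B v s := by
    simpa only [volterra, map_zero, intervalIntegral.integral_zero] using
      volterra_mono hT hT hTpos (.refl T) hB (fun _ _ => le_rfl)
        (continuousOn_const (c := (0 : E))) hv (fun _ _ => le_rfl) hv0 hs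
  have negPart_le {s : ℝ} (hs : 0 ≤ s) : (w s)⁻ ≤ volterra T B (fun s => (w s)⁻) s := by
    refine sup_le ?_ (volterra_nonneg negPart_continuous (fun _ _ => negPart_nonneg _) hs)
    have split := hT.volterra_sub B posPart_continuous negPart_continuous hs
    have : (fun s => (w s)⁺) - (fun s => (w s)⁻) = w := funext fun s => posPart_sub_negPart (w s)
    rw [this] at split
    rw [neg_le]
    refine le_trans ?_ (h s hs)
    rw [split, ← zero_sub]
    exact sub_le_sub_right
      (volterra_nonneg posPart_continuous (fun _ _ => posPart_nonneg _) hs) _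
  obtain ⟨C, hC⟩ := hT.locallyBounded t
  have norm_negPart_le : ∀ s ∈ Icc 0 t, ‖(w s)⁻‖ ≤ C * ‖B‖ * ∫ r in (0 : ℝ)..s, ‖(w r)⁻‖ :=
    fun s hs => calc
      ‖(w s)⁻‖ ≤ ‖volterra T B (fun s => (w s)⁻) s‖ := norm_le_norm_of_abs_le_abs <| by
        rw [abs_of_nonneg (negPart_nonneg _)]
        exact (negPart_le hs.1).trans (le_abs_self _)
      _ ≤ C * ‖B‖ * ∫ r in (0 : ℝ)..s, ‖(w r)⁻‖ :=
        norm_volterra_le (fun r hr => hC r ⟨hr.1, hr.2.trans hs.2⟩) B negPart_continuous hs.1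
  have norm_eq_zero := eq_zero_of_le_mul_integral negPart_continuous.norm
    (fun _ _ => norm_nonneg _) norm_negPart_le ht
  exact negPart_eq_zero.1 (_root_.norm_eq_zero.1 norm_eq_zero)

lemma IsBoundedPerturbation.nonneg (hT : IsC0Semigroup T) (hS : IsC0Semigroup S)
    (hTS : IsBoundedPerturbation T S B) (hTpos : 0 ⊑ T)
    (hB : B ≼ m • ContinuousLinearMap.id ℝ E) : 0 ⊑ S := fun t ht f hf =>
  nonneg_of_volterra_le (hT.rescale m) (hTpos.rescale_nonneg m) hB.sub_nonneg (hS.2 f)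
    (fun s hs => by
      conv_rhs => rw [hTS.apply_eq_rescale_add_volterra hT hS m hs f]
      exact le_add_of_nonneg_left (hTpos.rescale_nonneg m s hs f hf)) ht

lemma IsBoundedPerturbation.mono (h₁ : IsBoundedPerturbation T₁ S₁ B₁)
    (h₂ : IsBoundedPerturbation T₂ S₂ B₂) (hT₁ : IsC0Semigroup T₁) (hT₂ : IsC0Semigroup T₂)
    (hS₁ : IsC0Semigroup S₁) (hS₂ : IsC0Semigroup S₂) (hT₁pos : 0 ⊑ T₁) (hT : T₁ ⊑ T₂)
    (hB : B₂ ≼ B₁) (hB₁ : B₁ ≼ m • ContinuousLinearMap.id ℝ E) : S₁ ⊑ S₂ := by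
  intro t ht f hf
  have hS₁pos := h₁.nonneg hT₁ hS₁ hT₁pos hB₁
  refine _root_.sub_nonneg.1 (nonneg_of_volterra_le (w := (fun s => S₂ s f) - fun s => S₁ s f)
    (hT₂.rescale m) ((hT₁pos.trans hT).rescale_nonneg m) (hB.trans hB₁).sub_nonneg
    ((hS₂.2 f).sub (hS₁.2 f)) (fun s hs => ?_) ht)
  have free_le : rescale m T₁ s f ≤ rescale m T₂ s f := hT.rescale m s hs f hf
  have volterra_le :
      volterra (rescale m T₁) (m • ContinuousLinearMap.id ℝ E - B₁) (fun s => S₁ s f) s ≤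
        volterra (rescale m T₂) (m • ContinuousLinearMap.id ℝ E - B₂) (fun s => S₁ s f) s :=
    volterra_mono (hT₁.rescale m) (hT₂.rescale m) (hT₁pos.rescale_nonneg m) (hT.rescale m)
      hB₁.sub_nonneg (hB.sub_le_sub_left _) (hS₁.2 f) (hS₁.2 f)
      (fun s hs => hS₁pos s hs f hf) (fun _ _ => le_rfl) hs
  rw [(hT₂.rescale m).volterra_sub _ (hS₂.2 f) (hS₁.2 f) hs, Pi.sub_apply]
  conv_rhs => rw [h₁.apply_eq_rescale_add_volterra hT₁ hS₁ m hs f,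
    h₂.apply_eq_rescale_add_volterra hT₂ hS₂ m hs f]
  rw [add_sub_add_comm]
  exact (_root_.sub_le_sub_left volterra_le _).trans
    (le_add_of_nonneg_left (_root_.sub_nonneg.2 free_le))

end Lattice

section Truncation

variable {Ω : Type*}

lemma trunc_nonneg (V : Ω → ℝ≥0∞) (n : ℕ) (ω : Ω) : 0 ≤ trunc V n ω := ENNReal.toReal_nonneg

lemma abs_trunc_le (V : Ω → ℝ≥0∞) (n : ℕ) (ω : Ω) : |trunc V n ω| ≤ n := by
  rw [abs_of_nonneg (trunc_nonneg V n ω)]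
  exact (ENNReal.toReal_mono (natCast_ne_top n) (min_le_right _ _)).trans_eq
    (ENNReal.toReal_natCast n)

lemma trunc_mono (V : Ω → ℝ≥0∞) (ω : Ω) : Monotone fun n => trunc V n ω := fun _ _ hnm =>
  ENNReal.toReal_mono (min_lt_of_right_lt (natCast_lt_top _)).ne
    (min_le_min le_rfl (Nat.cast_le.2 hnm))

lemma mul_trunc_resid_le {ε : ℝ} (hε : 0 ≤ ε) {n m k K : ℕ} (hk : k ≤ ε * n)
    (hK : k + ε * m ≤ K) (V : Ω → ℝ≥0∞) (ω : Ω) :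
    ε * trunc (resid V n) m ω ≤ trunc (smulRate ε V) K ω - trunc (smulRate ε V) k ω := by
  set e := ENNReal.ofReal ε with e_def
  set v := V ω
  have hk' : (k : ℝ≥0∞) ≤ e * n := by
    rw [← ofReal_natCast, ← ofReal_natCast, ← ofReal_mul hε]
    exact ofReal_le_ofReal hk
  have hK' : (k : ℝ≥0∞) + e * m ≤ K := by
    rw [← ofReal_natCast, ← ofReal_natCast, ← ofReal_natCast, ← ofReal_mul hε,
      ← ofReal_add (Nat.cast_nonneg k) (by positivity)]
    exact ofReal_le_ofReal hK
  have low_le : min (e * v) k ≤ e * min v n := by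
    rw [mul_min]
    exact min_le_min le_rfl hk'
  have add_le : min (e * v) k + e * min (v - min v n) m ≤ min (e * v) K := by
    refine le_min ?_ ?_
    · calc min (e * v) k + e * min (v - min v n) m
          ≤ e * min v n + e * (v - min v n) :=
            add_le_add low_le (mul_le_mul_right (min_le_left _ _) e)
        _ = e * v := by rw [← mul_add, add_tsub_cancel_of_le (min_le_left _ _)]
    · exact (add_le_add (min_le_right _ _) (mul_le_mul_right (min_le_right _ _) e)).trans hK'
  have low_ne_top : min (e * v) k ≠ ∞ := (min_lt_of_right_lt (natCast_lt_top _)).ne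
  have toReal_le := ENNReal.toReal_mono (min_lt_of_right_lt (natCast_lt_top _)).ne add_le
  rw [ENNReal.toReal_add low_ne_top
    (mul_ne_top ofReal_ne_top (min_lt_of_right_lt (natCast_lt_top _)).ne), ENNReal.toReal_mul,
    e_def, ENNReal.toReal_ofReal hε] at toReal_le
  exact le_sub_iff_add_le'.2 toReal_le

end Truncation

section Lp

variable {Ω : Type*} [MeasurableSpace Ω] {μ : Measure Ω} {p : ℝ≥0∞} [Fact (1 ≤ p)]

/-! ### Multiplication operators -/

instance instIsOrderedModuleLp : IsOrderedModule ℝ (Lp ℝ p μ) where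
  smul_le_smul_of_nonneg_left a ha f g hfg := by
    rw [← Lp.coeFn_le] at *
    filter_upwards [hfg, Lp.coeFn_smul a f, Lp.coeFn_smul a g] with ω hω hf hg
    rw [hf, hg]
    exact smul_le_smul_of_nonneg_left hω ha
  smul_le_smul_of_nonneg_right f hf a b hab := by
    rw [← Lp.coeFn_nonneg] at hf
    rw [← Lp.coeFn_le]
    filter_upwards [hf, Lp.coeFn_smul a f, Lp.coeFn_smul b f] with ω hω ha hb
    rw [ha, hb]
    exact smul_le_smul_of_nonneg_right hab hω

/-- `B` acts on `L_p(μ)` as multiplication by the function `W`. -/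
def IsMultiplicationBy (B : Lp ℝ p μ →L[ℝ] Lp ℝ p μ) (W : Ω → ℝ) : Prop :=
  ∀ f : Lp ℝ p μ, ⇑(B f) =ᵐ[μ] fun ω => W ω * f ω

variable {B B₁ B₂ : Lp ℝ p μ →L[ℝ] Lp ℝ p μ} {W W₁ W₂ : Ω → ℝ} {c c₁ c₂ : ℝ}

lemma IsMultiplicationBy.nonneg (h : IsMultiplicationBy B W) (hW : ∀ ω, 0 ≤ W ω) : 0 ≼ B := by
  intro f hf
  rw [_root_.zero_apply, ← Lp.coeFn_nonneg]
  filter_upwards [(Lp.coeFn_nonneg f).2 hf, h f] with ω hfω hB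
  rw [hB]
  exact mul_nonneg (hW ω) hfω

lemma IsMultiplicationBy.sub (h₁ : IsMultiplicationBy B₁ W₁) (h₂ : IsMultiplicationBy B₂ W₂) :
    IsMultiplicationBy (B₁ - B₂) (W₁ - W₂) := by
  intro f
  filter_upwards [h₁ f, h₂ f, Lp.coeFn_sub (B₁ f) (B₂ f)] with ω hB₁ hB₂ hsub
  rw [_root_.sub_apply, hsub, Pi.sub_apply, hB₁, hB₂, Pi.sub_apply, sub_mul]

lemma IsMultiplicationBy.opLE (h₁ : IsMultiplicationBy B₁ W₁) (h₂ : IsMultiplicationBy B₂ W₂)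
    (hW : ∀ ω, W₁ ω ≤ W₂ ω) : B₁ ≼ B₂ := fun f hf =>
  sub_nonneg.1 ((h₂.sub h₁).nonneg (fun ω => sub_nonneg.2 (hW ω)) f hf)

lemma IsMultiplicationBy.const_smul (h : IsMultiplicationBy B W) (c : ℝ) :
    IsMultiplicationBy (c • B) (c • W) := by
  intro f
  filter_upwards [h f, Lp.coeFn_smul c (B f)] with ω hB hsmul
  rw [_root_.smul_apply, hsmul, Pi.smul_apply, hB, Pi.smul_apply, smul_mul_assoc]

lemma isMultiplicationBy_const (c : ℝ) :
    IsMultiplicationBy (c • ContinuousLinearMap.id ℝ (Lp ℝ p μ)) fun _ => c := fun f =>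
  Lp.coeFn_smul c f

lemma aestronglyMeasurable_mul_of_dense {D : Set (Lp ℝ p μ)} (hD : Dense D)
    (hWD : ∀ f ∈ D, AEStronglyMeasurable (fun ω => W ω * f ω) μ) (f : Lp ℝ p μ) :
    AEStronglyMeasurable (fun ω => W ω * f ω) μ := by
  obtain ⟨u, huD, hu⟩ := mem_closure_iff_seq_limit.1 (hD f)
  obtain ⟨ns, -, hns⟩ := (tendstoInMeasure_of_tendsto_Lp hu).exists_seq_tendsto_ae
  exact aestronglyMeasurable_of_tendsto_ae atTop (fun i => hWD _ (huD (ns i)))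
    (hns.mono fun ω hω => hω.const_mul (W ω))

lemma exists_isMultiplicationBy (hW : ∀ ω, |W ω| ≤ c)
    (hmeas : ∀ f : Lp ℝ p μ, AEStronglyMeasurable (fun ω => W ω * f ω) μ) :
    ∃ B : Lp ℝ p μ →L[ℝ] Lp ℝ p μ, IsMultiplicationBy B W := by
  have norm_mul_le (f : Lp ℝ p μ) (ω : Ω) : ‖W ω * f ω‖ ≤ c * ‖f ω‖ :=
    (norm_mul _ _).trans_le (mul_le_mul_of_nonneg_right (hW ω) (norm_nonneg _))
  have memLp (f : Lp ℝ p μ) : MemLp (fun ω => W ω * f ω) p μ :=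
    (Lp.memLp f).of_le_mul (hmeas f) (.of_forall (norm_mul_le f))
  let mulLinear : Lp ℝ p μ →ₗ[ℝ] Lp ℝ p μ :=
    { toFun f := (memLp f).toLp _
      map_add' f g := by
        rw [← MemLp.toLp_add]
        refine MemLp.toLp_congr _ _ ?_
        filter_upwards [Lp.coeFn_add f g] with ω hω
        rw [hω, Pi.add_apply, Pi.add_apply, mul_add]
      map_smul' a f := by
        rw [RingHom.id_apply, ← MemLp.toLp_const_smul]
        refine MemLp.toLp_congr _ _ ?_
        filter_upwards [Lp.coeFn_smul a f] with ω hω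
        rw [hω, Pi.smul_apply, Pi.smul_apply, mul_smul_comm] }
  refine ⟨mulLinear.mkContinuous c fun f => ?_, fun f => (memLp f).coeFn_toLp⟩
  refine Lp.norm_le_mul_norm_of_ae_le_mul ?_
  filter_upwards [(memLp f).coeFn_toLp] with ω hω
  exact (congr_arg norm hω).trans_le (norm_mul_le f ω)

/-! ### Perturbation by a bounded function -/

variable {T S U T₁ T₂ S₁ S₂ : ℝ → Lp ℝ p μ →L[ℝ] Lp ℝ p μ}

lemma IsPerturbedSG.generatorDomain_subset (h : IsPerturbedSG μ p T S W) :
    generatorDomain S ⊆ generatorDomain T := fun f ⟨g, hg⟩ =>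
  let ⟨g₀, hg₀, _⟩ := (h.2 f g).1 hg
  ⟨g₀, hg₀⟩

/-- Measurability of `W f` comes from the generators: on the dense domain of the generator of `S`,
`W f` is the difference of two elements of `L_p(μ)`. -/
lemma IsPerturbedSG.exists_isMultiplicationBy (h : IsPerturbedSG μ p T S W)
    (hW : ∀ ω, |W ω| ≤ c) : ∃ B : Lp ℝ p μ →L[ℝ] Lp ℝ p μ, IsMultiplicationBy B W := by
  refine Absorption.exists_isMultiplicationBy hW
    (aestronglyMeasurable_mul_of_dense h.1.dense_generatorDomain fun f ⟨g, hg⟩ => ?_)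
  obtain ⟨g₀, -, g_eq⟩ := (h.2 f g).1 hg
  refine ((Lp.aestronglyMeasurable g₀).sub (Lp.aestronglyMeasurable g)).congr ?_
  filter_upwards [g_eq] with ω hω
  rw [Pi.sub_apply, hω, _root_.sub_sub_cancel]

lemma IsPerturbedSG.isBoundedPerturbation (h : IsPerturbedSG μ p T S W)
    (hB : IsMultiplicationBy B W) : IsBoundedPerturbation T S B := by
  intro f g
  rw [h.2]
  have ae_eq_iff (g₀ : Lp ℝ p μ) :
      ⇑g =ᵐ[μ] (fun ω => g₀ ω - W ω * f ω) ↔ g₀ = g + B f := by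
    have sub_ae_eq : ⇑(g₀ - B f) =ᵐ[μ] fun ω => g₀ ω - W ω * f ω := by
      filter_upwards [Lp.coeFn_sub g₀ (B f), hB f] with ω hsub hmul
      rw [hsub, Pi.sub_apply, hmul]
    rw [← sub_eq_iff_eq_add, eq_comm, Lp.ext_iff]
    exact ⟨fun hg => hg.trans sub_ae_eq.symm, fun hg => hg.trans sub_ae_eq⟩
  simp only [ae_eq_iff, exists_eq_right]

lemma isPerturbedSG_zero (hT : IsC0Semigroup T) : IsPerturbedSG μ p T T 0 := by
  refine ⟨hT, fun f g => ?_⟩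
  simp only [Pi.zero_apply, zero_mul, sub_zero]
  exact ⟨fun hg => ⟨g, hg, .rfl⟩, fun ⟨g₀, hg₀, hg⟩ => Lp.ext hg ▸ hg₀⟩

lemma IsPerturbedSG.nonneg (h : IsPerturbedSG μ p T S W) (hT : IsC0Semigroup T) (hTpos : 0 ⊑ T)
    (hW : ∀ ω, |W ω| ≤ c) : 0 ⊑ S := by
  obtain ⟨B, hB⟩ := h.exists_isMultiplicationBy hW
  exact (h.isBoundedPerturbation hB).nonneg hT h.1 hTpos
    (hB.opLE (isMultiplicationBy_const c) fun ω => (le_abs_self _).trans (hW ω))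

lemma IsPerturbedSG.mono (h₁ : IsPerturbedSG μ p T₁ S₁ W₁) (h₂ : IsPerturbedSG μ p T₂ S₂ W₂)
    (hT₁ : IsC0Semigroup T₁) (hT₂ : IsC0Semigroup T₂) (hT₁pos : 0 ⊑ T₁) (hT : T₁ ⊑ T₂)
    (hW₁ : ∀ ω, |W₁ ω| ≤ c₁) (hW₂ : ∀ ω, |W₂ ω| ≤ c₂) (hW : ∀ ω, W₂ ω ≤ W₁ ω) : S₁ ⊑ S₂ := by
  obtain ⟨B₁, hB₁⟩ := h₁.exists_isMultiplicationBy hW₁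
  obtain ⟨B₂, hB₂⟩ := h₂.exists_isMultiplicationBy hW₂
  exact (h₁.isBoundedPerturbation hB₁).mono (h₂.isBoundedPerturbation hB₂) hT₁ hT₂ h₁.1 h₂.1
    hT₁pos hT (hB₂.opLE hB₁ hW)
    (hB₁.opLE (isMultiplicationBy_const c₁) fun ω => (le_abs_self _).trans (hW₁ ω))

lemma IsPerturbedSG.le_base (h : IsPerturbedSG μ p T S W) (hT : IsC0Semigroup T) (hTpos : 0 ⊑ T)
    (hW : ∀ ω, |W ω| ≤ c) (hW₀ : ∀ ω, 0 ≤ W ω) : S ⊑ T :=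
  h.mono (isPerturbedSG_zero hT) hT hT hTpos (.refl T) hW (c₂ := 0) (fun _ => abs_zero.le) hW₀

lemma IsPerturbedSG.smul_sub_le_sub (h : IsPerturbedSG μ p U S W)
    (h₁ : IsPerturbedSG μ p T S₁ W₁) (h₂ : IsPerturbedSG μ p T S₂ W₂) (hU : IsC0Semigroup U)
    (hUpos : 0 ⊑ U) (hUS₁ : U ⊑ S₁) (hUS₂ : U ⊑ S₂) (hWc : ∀ ω, |W ω| ≤ c)
    (hW₁ : ∀ ω, |W₁ ω| ≤ c₁) (hW₂ : ∀ ω, |W₂ ω| ≤ c₂) (hW₀ : ∀ ω, 0 ≤ W ω) {ε : ℝ} (hε : 0 ≤ ε)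
    (hW : ∀ ω, ε * W ω ≤ W₂ ω - W₁ ω) {t : ℝ} (ht : 0 ≤ t) {f : Lp ℝ p μ} (hf : 0 ≤ f) :
    ε • (U t f - S t f) ≤ S₁ t f - S₂ t f := by
  obtain ⟨B, hB⟩ := h.exists_isMultiplicationBy hWc
  obtain ⟨B₁, hB₁⟩ := h₁.exists_isMultiplicationBy hW₁
  obtain ⟨B₂, hB₂⟩ := h₂.exists_isMultiplicationBy hW₂
  have increment : IsBoundedPerturbation S₁ S₂ (B₂ - B₁) :=
    (h₁.isBoundedPerturbation hB₁).relative (h₂.isBoundedPerturbation hB₂)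
  exact (h.isBoundedPerturbation hB).smul_sub_le_sub increment hU h.1 h₁.1 h₂.1 hUpos
    (h.nonneg hU hUpos hWc) hUS₁ ((h.le_base hU hUpos hWc hW₀).trans hUS₂)
    ((hB.const_smul ε).nonneg fun ω => mul_nonneg hε (hW₀ ω))
    ((hB.const_smul ε).opLE (hB₂.sub hB₁) hW) ht hf

/-! ### Absorption semigroups -/

variable {V : Ω → ℝ≥0∞} {TV TV₁ TV₂ : ℝ → Lp ℝ p μ →L[ℝ] Lp ℝ p μ}

lemma IsAbsorptionSG.isSemigroup (h : IsAbsorptionSG μ p T V TV) : IsSemigroup TV :=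
  let ⟨_, hS, hlim⟩ := h
  isSemigroup_of_tendsto (fun n => (hS n).1.1) hlim

lemma IsAbsorptionSG.nonneg (h : IsAbsorptionSG μ p T V TV) (hT : IsC0Semigroup T)
    (hTpos : 0 ⊑ T) : 0 ⊑ TV := fun t ht f hf =>
  let ⟨_, hS, hlim⟩ := h
  ge_of_tendsto' (hlim t ht f) fun n =>
    (hS n).nonneg hT hTpos (abs_trunc_le V n) t ht f hf

lemma le_approximation_of_tendsto (hT : IsC0Semigroup T) (hTpos : 0 ⊑ T)
    {S : ℕ → ℝ → Lp ℝ p μ →L[ℝ] Lp ℝ p μ} (hS : ∀ n, IsPerturbedSG μ p T (S n) (trunc V n))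
    (hlim : ∀ t, 0 ≤ t → ∀ f, Tendsto (fun n => S n t f) atTop (𝓝 (TV t f))) (k : ℕ) :
    TV ⊑ S k := by
  intro t ht f hf
  refine le_of_tendsto (hlim t ht f) ?_
  filter_upwards [eventually_ge_atTop k] with n hn
  exact (hS n).mono (hS k) hT hT hTpos (.refl T) (abs_trunc_le V n) (abs_trunc_le V k)
    (fun ω => trunc_mono V ω hn) t ht f hf

lemma IsAbsorptionSG.le_base (h : IsAbsorptionSG μ p T V TV) (hT : IsC0Semigroup T)
    (hTpos : 0 ⊑ T) : TV ⊑ T :=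
  let ⟨_, hS, hlim⟩ := h
  (le_approximation_of_tendsto hT hTpos hS hlim 0).trans
    ((hS 0).le_base hT hTpos (abs_trunc_le V 0) (trunc_nonneg V 0))

lemma IsAbsorptionSG.isC0Semigroup_base (h : IsAbsorptionSG μ p T V TV) (hT : IsSemigroup T)
    (hTb : LocallyBounded T) : IsC0Semigroup T :=
  let ⟨_, hS, _⟩ := h
  hT.isC0Semigroup_of_dense_generatorDomain hTb
    ((hS 0).1.dense_generatorDomain.mono (hS 0).generatorDomain_subset)

lemma IsAbsorptionSG.mono (h₁ : IsAbsorptionSG μ p T₁ V TV₁) (h₂ : IsAbsorptionSG μ p T₂ V TV₂)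
    (hT₁ : IsC0Semigroup T₁) (hT₂ : IsC0Semigroup T₂) (hT₁pos : 0 ⊑ T₁) (hT : T₁ ⊑ T₂) :
    TV₁ ⊑ TV₂ := fun t ht f hf =>
  let ⟨_, hS₁, hlim₁⟩ := h₁
  let ⟨_, hS₂, hlim₂⟩ := h₂
  le_of_tendsto_of_tendsto' (hlim₁ t ht f) (hlim₂ t ht f) fun n =>
    (hS₁ n).mono (hS₂ n) hT₁ hT₂ hT₁pos hT (abs_trunc_le V n) (abs_trunc_le V n)
      (fun _ => le_rfl) t ht f hf

/-! ### Comparison of `T_{εV}` with `(T_V)_{-V}` -/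

variable {ε : ℝ} {Q R : ℕ → ℝ → Lp ℝ p μ →L[ℝ] Lp ℝ p μ} {L : ℝ → Lp ℝ p μ →L[ℝ] Lp ℝ p μ}

lemma IsAbsorptionSG.isC0Semigroup_of_iterate {V' : Ω → ℝ≥0∞} {TVV' : ℝ → Lp ℝ p μ →L[ℝ] Lp ℝ p μ}
    (h : IsAbsorptionSG μ p T V TV) (h' : IsAbsorptionSG μ p TV V' TVV') (hT : IsC0Semigroup T)
    (hTpos : 0 ⊑ T) : IsC0Semigroup TV :=
  h'.isC0Semigroup_base h.isSemigroup
    (hT.locallyBounded.of_familyLE (h.nonneg hT hTpos) (h.le_base hT hTpos))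

lemma IsAbsorptionSG.iterate_le {V' : Ω → ℝ≥0∞} {TVV' TV' : ℝ → Lp ℝ p μ →L[ℝ] Lp ℝ p μ}
    (h : IsAbsorptionSG μ p T V TV) (h' : IsAbsorptionSG μ p TV V' TVV')
    (hV' : IsAbsorptionSG μ p T V' TV') (hT : IsC0Semigroup T) (hTpos : 0 ⊑ T) : TVV' ⊑ TV' :=
  h'.mono hV' (h.isC0Semigroup_of_iterate h' hT hTpos) hT (h.nonneg hT hTpos)
    (h.le_base hT hTpos)

lemma IsAbsorptionSG.smul_sub_le_approximation_sub {S : ℕ → ℝ → Lp ℝ p μ →L[ℝ] Lp ℝ p μ}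
    {Q : ℝ → Lp ℝ p μ →L[ℝ] Lp ℝ p μ} (hT : IsC0Semigroup T) (hTpos : 0 ⊑ T) (hε : 0 ≤ ε)
    (hS : ∀ n, IsPerturbedSG μ p T (S n) (trunc (smulRate ε V) n))
    (hlim : ∀ t, 0 ≤ t → ∀ f, Tendsto (fun n => S n t f) atTop (𝓝 (U t f)))
    {n k : ℕ} (hQ : IsAbsorptionSG μ p U (resid V n) Q) (hk : k ≤ ε * n) {t : ℝ} (ht : 0 ≤ t)
    {f : Lp ℝ p μ} (hf : 0 ≤ f) : ε • (U t f - Q t f) ≤ S k t f - U t f := by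
  have hU : IsAbsorptionSG μ p T (smulRate ε V) U := ⟨S, hS, hlim⟩
  have U_le := le_approximation_of_tendsto hT hTpos hS hlim
  have hUC := hU.isC0Semigroup_of_iterate hQ hT hTpos
  obtain ⟨Q', hQ', Q'_tendsto⟩ := hQ
  have increment_le {m K : ℕ} (hK : k + ε * m ≤ K) :
      ε • (U t f - Q' m t f) ≤ S k t f - S K t f :=
    (hQ' m).smul_sub_le_sub (hS k) (hS K) hUC (hU.nonneg hT hTpos) (U_le k) (U_le K)
      (abs_trunc_le _ m) (abs_trunc_le _ k) (abs_trunc_le _ K) (trunc_nonneg _ m) hε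
      (mul_trunc_resid_le hε hk hK V) ht hf
  refine le_of_tendsto' (((Q'_tendsto t ht f).const_sub (U t f)).const_smul ε) fun m => ?_
  refine ge_of_tendsto ((hlim t ht f).const_sub (S k t f)) ?_
  filter_upwards [tendsto_natCast_atTop_atTop.eventually_ge_atTop (k + ε * m)] with K hK
  exact increment_le hK

lemma IsAbsorptionSG.le_of_tendsto_resid (hT : IsC0Semigroup T) (hTpos : 0 ⊑ T) (hε : 0 < ε)
    (hU : IsAbsorptionSG μ p T (smulRate ε V) U)
    (hR : ∀ n, IsAbsorptionSG μ p T (resid V n) (R n))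
    (hQ : ∀ n, IsAbsorptionSG μ p U (resid V n) (Q n))
    (hL : ∀ t, 0 ≤ t → ∀ f, Tendsto (fun n => R n t f) atTop (𝓝 (L t f))) : U ⊑ L := by
  intro t ht f hf
  obtain ⟨S, hS, hlim⟩ := id hU
  have smul_sub_le (k : ℕ) : ε • (U t f - L t f) ≤ S k t f - U t f := by
    refine le_of_tendsto (((hL t ht f).const_sub (U t f)).const_smul ε) ?_
    filter_upwards [(tendsto_natCast_atTop_atTop.const_mul_atTop hε).eventually_ge_atTop
      (k : ℝ)] with n hn
    calc ε • (U t f - R n t f) ≤ ε • (U t f - Q n t f) := smul_le_smul_of_nonneg_left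
          (sub_le_sub_left (hU.iterate_le (hQ n) (hR n) hT hTpos t ht f hf) _) hε.le
      _ ≤ S k t f - U t f :=
          IsAbsorptionSG.smul_sub_le_approximation_sub hT hTpos hε.le hS hlim (hQ n) hn ht hf
  have smul_sub_nonpos : ε • (U t f - L t f) ≤ 0 := by
    simpa only [sub_self] using ge_of_tendsto' ((hlim t ht f).sub_const (U t f)) smul_sub_le
  exact sub_nonpos.1 ((smul_nonpos_iff_nonpos_of_pos_left hε).1 smul_sub_nonpos)

end Lp

end Absorption

theorem statement8_general
    {Ω : Type*} [MeasurableSpace Ω] (μ : Measure Ω) (p : ℝ≥0∞) [Fact (1 ≤ p)]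
    (T : ℝ → Lp ℝ p μ →L[ℝ] Lp ℝ p μ)
    (hT : IsC0Semigroup T) (hTpos : IsPositiveSG T)
    (V : Ω → ℝ≥0∞)
    (Sε : ℝ → ℝ → Lp ℝ p μ →L[ℝ] Lp ℝ p μ)
    (hSε : ∀ ε : ℝ, 0 < ε → IsAbsorptionSG μ p T (smulRate ε V) (Sε ε))
    (R : ℕ → ℝ → Lp ℝ p μ →L[ℝ] Lp ℝ p μ)
    (hR : ∀ n : ℕ, IsAbsorptionSG μ p T (resid V n) (R n))
    (Q : ℝ → ℕ → ℝ → Lp ℝ p μ →L[ℝ] Lp ℝ p μ)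
    (hQ : ∀ ε : ℝ, 0 < ε → ∀ n : ℕ, IsAbsorptionSG μ p (Sε ε) (resid V n) (Q ε n))
    (L L₀ : ℝ → Lp ℝ p μ →L[ℝ] Lp ℝ p μ)
    (hL : ∀ t : ℝ, 0 ≤ t → ∀ f : Lp ℝ p μ,
      Tendsto (fun n : ℕ => R n t f) atTop (𝓝 (L t f)))
    (hL₀ : ∀ t : ℝ, 0 ≤ t → ∀ f : Lp ℝ p μ,
      Tendsto (fun ε : ℝ => Sε ε t f) (𝓝[>] (0 : ℝ)) (𝓝 (L₀ t f))) :
    (∀ ε : ℝ, 0 < ε → ∀ n : ℕ, ∀ t : ℝ, 0 ≤ t → ∀ f : Lp ℝ p μ, 0 ≤ f →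
        Q ε n t f ≤ R n t f) ∧
    (∀ ε : ℝ, 0 < ε → ∀ t : ℝ, 0 ≤ t → ∀ f : Lp ℝ p μ, 0 ≤ f → Sε ε t f ≤ L t f) ∧
    (∀ t : ℝ, 0 ≤ t → ∀ f : Lp ℝ p μ, 0 ≤ f → L₀ t f ≤ L t f) := by
  have Sε_le : ∀ ε, 0 < ε → ∀ t, 0 ≤ t → ∀ f : Lp ℝ p μ, 0 ≤ f → Sε ε t f ≤ L t f := fun ε hε =>
    IsAbsorptionSG.le_of_tendsto_resid hT hTpos hε (hSε ε hε) hR (hQ ε hε) hL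
  refine ⟨fun ε hε n => (hSε ε hε).iterate_le (hQ ε hε n) (hR n) hT hTpos, Sε_le,
    fun t ht f hf => le_of_tendsto (hL₀ t ht f) ?_⟩
  filter_upwards [self_mem_nhdsWithin] with ε hε
  exact Sε_le ε hε t ht f hf

/-- For `T`-admissible `V`: `(T_{εV})_{V−V∧n}(t) ≤ T_{V−V∧n}(t)` for all
`ε > 0`, `n ∈ ℕ`, `t ≥ 0`; letting `n → ∞` gives `T_{εV}(t) ≤ (T_V)_{−V}(t)`, and letting
`ε → 0+` gives `T_{0,V} ≤ (T_V)_{−V}`. -/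
theorem statement8
    {Ω : Type*} [MeasurableSpace Ω] (μ : Measure Ω) (p : ℝ≥0∞) [Fact (1 ≤ p)] (hp : p ≠ ∞)
    (T : ℝ → Lp ℝ p μ →L[ℝ] Lp ℝ p μ)
    (hT : IsC0Semigroup T) (hTpos : IsPositiveSG T)
    (V : Ω → ℝ≥0∞) (hV : Admissible μ p T V)
    -- the absorption semigroups `T_{εV}` for `ε > 0`
    (Sε : ℝ → ℝ → Lp ℝ p μ →L[ℝ] Lp ℝ p μ)
    (hSε : ∀ ε : ℝ, 0 < ε → IsAbsorptionSG μ p T (smulRate ε V) (Sε ε))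
    -- the absorption semigroups `T_{V − V∧n}`
    (R : ℕ → ℝ → Lp ℝ p μ →L[ℝ] Lp ℝ p μ)
    (hR : ∀ n : ℕ, IsAbsorptionSG μ p T (resid V n) (R n))
    -- the absorption semigroups `(T_{εV})_{V − V∧n}`
    (Q : ℝ → ℕ → ℝ → Lp ℝ p μ →L[ℝ] Lp ℝ p μ)
    (hQ : ∀ ε : ℝ, 0 < ε → ∀ n : ℕ, IsAbsorptionSG μ p (Sε ε) (resid V n) (Q ε n))
    -- `(T_V)_{−V} = s-lim_{n→∞} T_{V−V∧n}` and `T_{0,V} = s-lim_{ε→0+} T_{εV}`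
    (L L₀ : ℝ → Lp ℝ p μ →L[ℝ] Lp ℝ p μ)
    (hL : ∀ t : ℝ, 0 ≤ t → ∀ f : Lp ℝ p μ,
      Tendsto (fun n : ℕ => R n t f) atTop (𝓝 (L t f)))
    (hL₀ : ∀ t : ℝ, 0 ≤ t → ∀ f : Lp ℝ p μ,
      Tendsto (fun ε : ℝ => Sε ε t f) (𝓝[>] (0 : ℝ)) (𝓝 (L₀ t f))) :
    -- `(T_{εV})_{V−V∧n}(t) ≤ T_{V−V∧n}(t)`
    (∀ ε : ℝ, 0 < ε → ∀ n : ℕ, ∀ t : ℝ, 0 ≤ t → ∀ f : Lp ℝ p μ, 0 ≤ f →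
        Q ε n t f ≤ R n t f) ∧
    -- `T_{εV}(t) ≤ (T_V)_{−V}(t)`
    (∀ ε : ℝ, 0 < ε → ∀ t : ℝ, 0 ≤ t → ∀ f : Lp ℝ p μ, 0 ≤ f → Sε ε t f ≤ L t f) ∧
    -- `T_{0,V} ≤ (T_V)_{−V}`
    (∀ t : ℝ, 0 ≤ t → ∀ f : Lp ℝ p μ, 0 ≤ f → L₀ t f ≤ L t f) :=
  statement8_general μ p T hT hTpos V Sε hSε R hR Q hQ L L₀ hL hL₀
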